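/- arXiv:0912.1094 — 2 statements merged into one kernel-verified Lean document; each statement's English description precedes it below -/
import Mathlib

section
/- For the constructed product measure P one has ∑_{k∈ℤ} (P_k({0}) − P_{k−1}({0}))² = 2 ∑_{t=1}^{∞} ((λ_t − 1)/(2(1+λ_t)))², and this sum is finite; consequently the shift T is nonsingular with respect to P. -/
open MeasureTheory Filter Topology

noncomputable section

/-- The sequence space `{0,1}^ℤ`, with `true` playing the role of `1`. -/
abbrev Xspace := ℤ → Bool

/-- The left shift `(Tw)_i = w_{i+1}`. -/
def shiftT (w : Xspace) : Xspace := fun i => w (i + 1)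

/-- The inverse of the left shift, so that `P ∘ T = Measure.map shiftInv P`. -/
def shiftInv (w : Xspace) : Xspace := fun i => w (i - 1)

/-- `coordWt p b` is `P_k({b})` when `P_k({0}) = p`. -/
def coordWt (p : ℝ) (b : Bool) : ℝ := if b then 1 - p else p

/-- The set `A_t = {∏_{u=1}^t λ_u^{x_u} : x_u ∈ ℤ, |x_u| ≤ n_u}`. -/
def Aset (lam : ℕ → ℝ) (nn : ℕ → ℕ) (t : ℕ) : Set ℝ :=
  {x | ∃ c : ℕ → ℤ, (∀ u, |c u| ≤ (nn u : ℤ)) ∧ x = ∏ u ∈ Finset.Icc 1 t, lam u ^ c u}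

/-- The data of Kosloff's inductive construction: a summable sequence `ε_t > 0`,
`M_0 = 1`, `λ_t = exp(2^{-k_t})` with `k_t = ⌊log₂(M_{t-1}/ε_t)⌋ + 1`,
`n_t` a positive integer satisfying Property *, `N_t = M_{t-1} + n_t`,
`m_t = N_t (2 + 2^{3N_t})`, `M_t = N_t + m_t`. -/
structure KosloffData where
  eps : ℕ → ℝ
  lam : ℕ → ℝ
  nn : ℕ → ℕ
  M : ℕ → ℕ
  N : ℕ → ℕ
  m : ℕ → ℕ
  eps_pos : ∀ t, 1 ≤ t → 0 < eps t
  eps_summable : Summable eps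
  M_zero : M 0 = 1
  lam_def : ∀ t, 1 ≤ t →
    lam t = Real.exp ((2 : ℝ) ^ (-(⌊Real.logb 2 ((M (t - 1) : ℝ) / eps t)⌋ + 1)))
  nn_pos : ∀ t, 1 ≤ t → 0 < nn t
  prop_star : ∀ t, 1 ≤ t → ∀ a ∈ Aset lam nn (t - 1), a ^ 2 ≤ lam t ^ ((nn t : ℝ) / 4)
  N_def : ∀ t, 1 ≤ t → N t = M (t - 1) + nn t
  m_def : ∀ t, 1 ≤ t → m t = N t * (2 + 2 ^ (3 * N t))
  M_def : ∀ t, 1 ≤ t → M t = N t + m t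

/-- `P` is the product measure `∏_k P_k` of Kosloff's construction, where `p k = P_k({0})`:
`p k = 1/2` for `k ≥ 0`, `p k = 1/(1+λ_t)` for `-N_t < k ≤ -M_{t-1}`, and `p k = 1/2`
for `-M_t < k ≤ -N_t`; cylinders get product mass. -/
def IsKosloffMeasure (D : KosloffData) (p : ℤ → ℝ) (P : Measure Xspace) : Prop :=
  IsProbabilityMeasure P ∧
  (∀ k : ℤ, 0 ≤ k → p k = 1 / 2) ∧
  (∀ t : ℕ, 1 ≤ t → ∀ k : ℤ, -(D.N t : ℤ) < k → k ≤ -(D.M (t - 1) : ℤ) →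
      p k = 1 / (1 + D.lam t)) ∧
  (∀ t : ℕ, 1 ≤ t → ∀ k : ℤ, -(D.M t : ℤ) < k → k ≤ -(D.N t : ℤ) → p k = 1 / 2) ∧
  (∀ k l : ℤ, ∀ b : ℤ → Bool,
    P {w : Xspace | ∀ i ∈ Finset.Icc k l, w i = b i}
      = ∏ i ∈ Finset.Icc k l, ENNReal.ofReal (coordWt (p i) (b i)))

/-- The Radon–Nikodym derivative `(Tⁿ)' = d(P∘Tⁿ)/dP`. -/
def rnD (P : Measure Xspace) (n : ℕ) : Xspace → ENNReal :=
  Measure.rnDeriv (Measure.map (shiftInv^[n]) P) P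

/-- `T` is nonsingular: `P∘T` and `P` are mutually absolutely continuous. -/
def ShiftNonsingular (P : Measure Xspace) : Prop :=
  Measure.map shiftInv P ≪ P ∧ P ≪ Measure.map shiftInv P

/-- The ratio set `R(T,P)` of the shift. -/
def ratioSet (P : Measure Xspace) : Set ℝ :=
  {a | 0 ≤ a ∧ ∀ A : Set Xspace, MeasurableSet A → 0 < P A → ∀ ε : ℝ, 0 < ε → ∃ n : ℕ,
      0 < P (A ∩ shiftT^[n] ⁻¹' A ∩ {w | |(rnD P n w).toReal - a| ≤ ε})}

/-- `t(n) = min {t ≥ 1 : n < N_t}`. -/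
def tOf (D : KosloffData) (n : ℕ) : ℕ := sInf {t : ℕ | 1 ≤ t ∧ n < D.N t}

/-- `Υ_u(w) = ∑_{k=-N_u+1}^{-M_{u-1}} w_k`. -/
def Ups (D : KosloffData) (u : ℕ) (w : Xspace) : ℤ :=
  ∑ k ∈ Finset.Icc (-(D.N u : ℤ) + 1) (-(D.M (u - 1) : ℤ)), (if w k then 1 else 0)

/-- `f_t(w) = ∏_{u=1}^t λ_u^{Υ_u(w)}`. -/
def fT (D : KosloffData) (t : ℕ) (w : Xspace) : ℝ :=
  ∏ u ∈ Finset.Icc 1 t, D.lam u ^ Ups D u w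

/-- The ratio `P_{k-n}({w_k}) / P_k({w_k})`. -/
def rr (p : ℤ → ℝ) (n : ℕ) (w : Xspace) (k : ℤ) : ℝ :=
  coordWt (p (k - n)) (w k) / coordWt (p k) (w k)

/-- A general product measure on `{0,1}^ℤ` with `q k = P_k({1})`. -/
def IsProductMeasure (q : ℤ → ℝ) (P : Measure Xspace) : Prop :=
  IsProbabilityMeasure P ∧
  ∀ k l : ℤ, ∀ b : ℤ → Bool,
    P {w : Xspace | ∀ i ∈ Finset.Icc k l, w i = b i}
      = ∏ i ∈ Finset.Icc k l, ENNReal.ofReal (if b i then q i else 1 - q i)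

lemma kos_lt1 (D : KosloffData) (t : ℕ) : D.M t < D.N (t + 1) := by
  have h1 := D.N_def (t + 1) (by omega)
  have h2 := D.nn_pos (t + 1) (by omega)
  simp only [Nat.add_sub_cancel] at h1
  omega

lemma kos_lt2 (D : KosloffData) (t : ℕ) : D.N (t + 1) < D.M (t + 1) := by
  have h1 := D.M_def (t + 1) (by omega)
  have h2 := D.m_def (t + 1) (by omega)
  have h3 := kos_lt1 D t
  have : 0 < D.N (t + 1) * (2 + 2 ^ (3 * D.N (t + 1))) := by
    exact Nat.mul_pos (by omega) (by positivity)
  omega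

lemma kos_mono (D : KosloffData) : StrictMono D.M :=
  strictMono_nat_of_lt_succ fun t => (kos_lt1 D t).trans (kos_lt2 D t)

lemma kos_exists (D : KosloffData) (k : ℤ) (hk : k ≤ -1) :
    ∃ t : ℕ, -(D.M (t + 1) : ℤ) < k ∧ k ≤ -(D.M t : ℤ) := by
  classical
  obtain ⟨j, hj⟩ := Int.eq_ofNat_of_zero_le (show 0 ≤ -k by omega)
  have hex : ∃ t, j < D.M t := ⟨j + 1, by have := (kos_mono D).le_apply (x := j + 1); omega⟩
  have h1 := Nat.find_spec hex
  have h2 : ∀ m, m < Nat.find hex → ¬ j < D.M m := fun m hm => Nat.find_min hex hm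
  rcases h0 : Nat.find hex with _ | t
  · rw [h0, D.M_zero] at h1; omega
  · rw [h0] at h1
    have := h2 t (by omega)
    exact ⟨t, by omega, by omega⟩

lemma kos_lam (D : KosloffData) (t : ℕ) :
    1 ≤ D.lam (t + 1) ∧ ((D.lam (t + 1) - 1) / (2 * (1 + D.lam (t + 1)))) ≤ D.eps (t + 1) ∧
      D.lam (t + 1) ≤ Real.exp (D.eps (t + 1)) := by
  have h := D.lam_def (t + 1) (by omega)
  simp only [Nat.add_sub_cancel] at h
  have he := D.eps_pos (t + 1) (by omega)
  have hM : (1 : ℝ) ≤ D.M t := by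
    have := (kos_mono D).monotone (Nat.zero_le t)
    rw [D.M_zero] at this
    exact_mod_cast this
  set e := D.eps (t + 1)
  set y := Real.logb 2 ((D.M t : ℝ) / e) with hy
  set x := (2 : ℝ) ^ (-(⌊y⌋ + 1)) with hx
  have hx0 : 0 < x := by positivity
  have hxe : x ≤ e := by
    have h1 : x ≤ (2 : ℝ) ^ (-y) := by
      rw [hx, ← Real.rpow_intCast]
      apply Real.rpow_le_rpow_of_exponent_le (by norm_num)
      push_cast
      have := Int.lt_floor_add_one y
      linarith
    have h2 : (2 : ℝ) ^ (-y) = e / D.M t := by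
      rw [Real.rpow_neg (by norm_num), hy, Real.rpow_logb (by norm_num) (by norm_num) (by positivity),
        inv_div]
    rw [h2] at h1
    exact h1.trans (div_le_self he.le hM)
  have hl1 : 1 ≤ D.lam (t + 1) := by rw [h]; exact Real.one_le_exp hx0.le
  refine ⟨hl1, ?_, ?_⟩
  · set l := D.lam (t + 1)
    have h3 : 1 - x ≤ l⁻¹ := by
      rw [h, ← Real.exp_neg]; linarith [Real.add_one_le_exp (-x)]
    have h4 : (1 - x) * l ≤ 1 := by
      have := mul_le_mul_of_nonneg_right h3 (by linarith : 0 ≤ l)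
      rwa [inv_mul_cancel₀ (by linarith)] at this
    rw [div_le_iff₀ (by linarith)]
    nlinarith
  · rw [h]; exact Real.exp_le_exp.2 hxe

/-- The positions of the jumps. -/
def kosG (D : KosloffData) : ℕ ⊕ ℕ → ℤ :=
  Sum.elim (fun t => -(D.M t : ℤ) + 1) (fun t => -(D.N (t + 1) : ℤ) + 1)

lemma kosG_inj (D : KosloffData) : Function.Injective (kosG D) := by
  have hm := kos_mono D
  have key : ∀ s t : ℕ, s < t → D.M (s + 1) ≤ D.M t := fun s t h => hm.monotone h
  rintro (s | s) (t | t) h <;> simp only [kosG, Sum.elim_inl, Sum.elim_inr] at h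
  · have : D.M s = D.M t := by omega
    rw [hm.injective this]
  · exfalso
    have a1 := kos_lt1 D t
    have a2 := kos_lt2 D t
    rcases lt_or_ge t s with h' | h'
    · have := key t s h'; omega
    · have := hm.monotone h'; omega
  · exfalso
    have a1 := kos_lt1 D s
    have a2 := kos_lt2 D s
    rcases lt_or_ge s t with h' | h'
    · have := key s t h'; omega
    · have := hm.monotone h'; omega
  · have a1 := kos_lt1 D t
    have a2 := kos_lt2 D t
    have b1 := kos_lt1 D s
    have b2 := kos_lt2 D s
    rcases lt_trichotomy s t with h' | h' | h'
    · have := key s t h'; omega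
    · rw [h']
    · have := key t s h'; omega

lemma kos_diff_zero (D : KosloffData) (p : ℤ → ℝ) (P : Measure Xspace)
    (hP : IsKosloffMeasure D p P) (k : ℤ) (hk : k ∉ Set.range (kosG D)) : p k = p (k - 1) := by
  obtain ⟨-, h0, h1, h2, -⟩ := hP
  have hM0 := D.M_zero
  have hkM : ∀ t : ℕ, k ≠ -(D.M t : ℤ) + 1 := fun t h => hk ⟨Sum.inl t, h.symm⟩
  have hkN : ∀ t : ℕ, k ≠ -(D.N (t + 1) : ℤ) + 1 := fun t h => hk ⟨Sum.inr t, h.symm⟩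
  have := hkM 0
  rcases lt_or_ge k 0 with hk0 | hk0
  · obtain ⟨t, ht1, ht2⟩ := kos_exists D k (by omega)
    have a := hkM (t + 1)
    have b := hkN t
    rcases lt_or_ge (-(D.N (t + 1) : ℤ)) k with hn | hn
    · rw [h1 (t + 1) (by omega) k hn (by simpa using ht2),
        h1 (t + 1) (by omega) (k - 1) (by omega) (by simp only [Nat.add_sub_cancel]; omega)]
    · rw [h2 (t + 1) (by omega) k ht1 hn,
        h2 (t + 1) (by omega) (k - 1) (by omega) (by omega)]
  · rw [h0 k hk0, h0 (k - 1) (by omega)]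

lemma kos_abs (l : ℝ) (hl : 1 ≤ l) : |1 / 2 - 1 / (1 + l)| = (l - 1) / (2 * (1 + l)) := by
  have : 1 / 2 - 1 / (1 + l) = (l - 1) / (2 * (1 + l)) := by
    have : 1 + l ≠ 0 := by linarith
    field_simp
    ring
  rw [this, abs_of_nonneg]
  apply div_nonneg <;> linarith

lemma kos_diff (D : KosloffData) (p : ℤ → ℝ) (P : Measure Xspace)
    (hP : IsKosloffMeasure D p P) (s : ℕ ⊕ ℕ) :
    |p (kosG D s) - p (kosG D s - 1)| = Sum.elim
      (fun t => (D.lam (t + 1) - 1) / (2 * (1 + D.lam (t + 1))))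
      (fun t => (D.lam (t + 1) - 1) / (2 * (1 + D.lam (t + 1)))) s := by
  obtain ⟨-, h0, h1, h2, -⟩ := hP
  rcases s with t | t
  · simp only [kosG, Sum.elim_inl, add_sub_cancel_right]
    have e1 : p (-(D.M t : ℤ) + 1) = 1 / 2 := by
      rcases t with _ | t
      · apply h0; rw [D.M_zero]; norm_num
      · have := kos_lt2 D t
        exact h2 (t + 1) (by omega) _ (by omega) (by omega)
    have := kos_lt1 D t
    rw [e1, h1 (t + 1) (by omega) (-(D.M t : ℤ)) (by omega) (by simp), kos_abs _ (kos_lam D t).1]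
  · simp only [kosG, Sum.elim_inr, add_sub_cancel_right]
    have a1 := kos_lt1 D t
    have a2 := kos_lt2 D t
    rw [h1 (t + 1) (by omega) (-(D.N (t + 1) : ℤ) + 1) (by omega)
      (by simp only [Nat.add_sub_cancel]; omega),
      h2 (t + 1) (by omega) (-(D.N (t + 1) : ℤ)) (by omega) (by omega), abs_sub_comm,
      kos_abs _ (kos_lam D t).1]

lemma kos_hasSum (D : KosloffData) (p : ℤ → ℝ) (P : Measure Xspace)
    (hP : IsKosloffMeasure D p P) (e : ℕ) (he : e ≠ 0) (S : ℝ)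
    (hS : HasSum (fun t => ((D.lam (t + 1) - 1) / (2 * (1 + D.lam (t + 1)))) ^ e) S) :
    HasSum (fun k : ℤ => |p k - p (k - 1)| ^ e) (S + S) := by
  rw [← (kosG_inj D).hasSum_iff]
  · apply HasSum.sum
    · convert hS using 1
      funext t
      have := kos_diff D p P hP (Sum.inl t)
      simp only [Sum.elim_inl] at this
      simp only [Function.comp_apply, this]
    · convert hS using 1
      funext t
      have := kos_diff D p P hP (Sum.inr t)
      simp only [Sum.elim_inr] at this
      simp only [Function.comp_apply, this]
  · intro k hk
    rw [kos_diff_zero D p P hP k hk]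
    simp [he]

lemma kos_summable1 (D : KosloffData) :
    Summable (fun t => ((D.lam (t + 1) - 1) / (2 * (1 + D.lam (t + 1))))) := by
  refine Summable.of_nonneg_of_le (fun t => ?_) (fun t => (kos_lam D t).2.1)
    ((summable_nat_add_iff 1).2 D.eps_summable)
  have := (kos_lam D t).1
  apply div_nonneg <;> linarith

lemma kos_summable2 (D : KosloffData) :
    Summable (fun t => ((D.lam (t + 1) - 1) / (2 * (1 + D.lam (t + 1)))) ^ 2) := by
  refine Summable.of_nonneg_of_le (fun t => by positivity) (fun t => ?_) (kos_summable1 D)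
  have := (kos_lam D t).1
  have h0 : 0 ≤ (D.lam (t + 1) - 1) / (2 * (1 + D.lam (t + 1))) := by
    apply div_nonneg <;> linarith
  have h1 : (D.lam (t + 1) - 1) / (2 * (1 + D.lam (t + 1))) ≤ 1 := by
    rw [div_le_one (by linarith)]; linarith
  nlinarith

lemma kos_lower (D : KosloffData) (p : ℤ → ℝ) (P : Measure Xspace)
    (hP : IsKosloffMeasure D p P) :
    ∃ δ : ℝ, 0 < δ ∧ ∀ k b, δ ≤ coordWt (p k) b := by
  obtain ⟨-, h0, h1, h2, -⟩ := hP
  obtain ⟨C, hC⟩ := D.eps_summable.tendsto_atTop_zero.bddAbove_range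
  have hC' : ∀ t, D.eps t ≤ C := fun t => hC ⟨t, rfl⟩
  have hC0 : 0 < C := (D.eps_pos 1 le_rfl).trans_le (hC' 1)
  have hE : 1 ≤ Real.exp C := Real.one_le_exp hC0.le
  have key : ∀ k, 1 / (1 + Real.exp C) ≤ p k ∧ p k ≤ 1 / 2 := by
    intro k
    have half : 1 / (1 + Real.exp C) ≤ 1 / 2 := by
      apply one_div_le_one_div_of_le <;> linarith
    rcases lt_or_ge k 0 with hk0 | hk0
    · obtain ⟨t, ht1, ht2⟩ := kos_exists D k (by omega)
      rcases lt_or_ge (-(D.N (t + 1) : ℤ)) k with hn | hn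
      · rw [h1 (t + 1) (by omega) k hn (by simpa using ht2)]
        obtain ⟨l1, -, l2⟩ := kos_lam D t
        have l3 := Real.exp_le_exp.2 (hC' (t + 1))
        constructor <;> apply one_div_le_one_div_of_le <;> linarith
      · rw [h2 (t + 1) (by omega) k ht1 hn]
        exact ⟨half, le_rfl⟩
    · rw [h0 k hk0]; exact ⟨half, le_rfl⟩
  refine ⟨1 / (1 + Real.exp C), by positivity, fun k b => ?_⟩
  obtain ⟨a1, a2⟩ := key k
  rcases b with _ | _ <;> simp only [coordWt] <;> norm_num at * <;> linarith

lemma cyl_bound (p q : ℤ → ℝ) (δ : ℝ) (hδ : 0 < δ) (hq : ∀ k b, δ ≤ coordWt (q k) b)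
    (hp : ∀ k b, 0 ≤ coordWt (p k) b)
    (hs : Summable fun k => |p k - q k|) (s : Finset ℤ) (b : ℤ → Bool) :
    ∏ i ∈ s, ENNReal.ofReal (coordWt (p i) (b i)) ≤
      ENNReal.ofReal (Real.exp (∑' k, |p k - q k| / δ)) *
        ∏ i ∈ s, ENNReal.ofReal (coordWt (q i) (b i)) := by
  have hq0 : ∀ k b, 0 ≤ coordWt (q k) b := fun k b => hδ.le.trans (hq k b)
  rw [← ENNReal.ofReal_prod_of_nonneg (fun i _ => hp _ _),
    ← ENNReal.ofReal_prod_of_nonneg (fun i _ => hq0 _ _), ← ENNReal.ofReal_mul (Real.exp_pos _).le]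
  apply ENNReal.ofReal_le_ofReal
  have h1 : ∏ i ∈ s, coordWt (p i) (b i) ≤
      ∏ i ∈ s, (Real.exp (|p i - q i| / δ) * coordWt (q i) (b i)) := by
    apply Finset.prod_le_prod (fun i _ => hp _ _)
    intro i _
    have e1 := Real.add_one_le_exp (|p i - q i| / δ)
    have e2 : coordWt (p i) (b i) ≤ coordWt (q i) (b i) + |p i - q i| := by
      have := abs_le.1 (le_refl |p i - q i|)
      unfold coordWt
      split_ifs <;> linarith
    have e3 : |p i - q i| ≤ |p i - q i| / δ * coordWt (q i) (b i) := by
      rw [div_mul_eq_mul_div, le_div_iff₀ hδ]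
      exact mul_le_mul_of_nonneg_left (hq _ _) (abs_nonneg _)
    have := mul_le_mul_of_nonneg_right e1 (hq0 i (b i))
    linarith
  refine h1.trans ?_
  rw [Finset.prod_mul_distrib, ← Real.exp_sum]
  apply mul_le_mul_of_nonneg_right _ (Finset.prod_nonneg fun i _ => hq0 _ _)
  apply Real.exp_le_exp.2
  exact (hs.div_const δ).sum_le_tsum s (fun i _ => by positivity)

lemma ac_of_cyl (μ ν : Measure Xspace) [IsFiniteMeasure ν] (C : ENNReal) (hC : C ≠ ⊤)
    (h : ∀ (n : ℕ) (b : ℤ → Bool),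
      μ {w : Xspace | ∀ i ∈ Finset.Icc (-n : ℤ) n, w i = b i} ≤
        C * ν {w : Xspace | ∀ i ∈ Finset.Icc (-n : ℤ) n, w i = b i}) : μ ≪ ν := by
  classical
  -- cylinder-measurable sets
  have hfin : ∀ (n : ℕ) (F : Set (Finset.Icc (-n : ℤ) n → Bool)),
      μ ((Finset.Icc (-n : ℤ) n).restrict ⁻¹' F) ≤
        C * ν ((Finset.Icc (-n : ℤ) n).restrict ⁻¹' F) := by
    intro n F
    have hm : Measurable ((Finset.Icc (-n : ℤ) n).restrict (π := fun _ => Bool)) :=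
      Finset.measurable_restrict _
    have hF : F = ↑(F.toFinite.toFinset) := by simp
    rw [hF, ← sum_measure_preimage_singleton _ (fun y _ => hm (measurableSet_singleton y)),
      ← sum_measure_preimage_singleton _ (fun y _ => hm (measurableSet_singleton y)),
      Finset.mul_sum]
    apply Finset.sum_le_sum
    intro y _
    have hy : ((Finset.Icc (-n : ℤ) n).restrict (π := fun _ => Bool)) ⁻¹' {y} =
        {w : Xspace | ∀ i ∈ Finset.Icc (-n : ℤ) n,
          w i = (fun j => if hj : j ∈ Finset.Icc (-n : ℤ) n then y ⟨j, hj⟩ else true) i} := by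
      ext w
      simp only [Set.mem_preimage, Set.mem_singleton_iff, Set.mem_ofPred_eq, funext_iff,
        Subtype.forall, Finset.restrict]
      refine forall_congr' fun i => forall_congr' fun hi => ?_
      rw [dif_pos hi]
    rw [hy]
    exact h n _
  have hopen : ∀ U : Set Xspace, IsOpen U → μ U ≤ C * ν U := by
    intro U hU
    let V : ℕ → Set Xspace := fun n =>
      {w | ∀ w' : Xspace, (∀ i ∈ Finset.Icc (-n : ℤ) n, w' i = w i) → w' ∈ U}
    have hVmono : Monotone V := by
      intro m n hmn w hw w' hw'
      refine hw w' fun i hi => hw' i ?_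
      simp only [Finset.mem_Icc] at *
      omega
    have hVU : ⋃ n, V n = U := by
      apply Set.Subset.antisymm
      · exact Set.iUnion_subset fun n w hw => hw w fun _ _ => rfl
      · intro w hw
        obtain ⟨I, u, hu, hsub⟩ := isOpen_pi_iff.1 hU w hw
        obtain ⟨n, hn⟩ : ∃ n : ℕ, ∀ i ∈ I, i.natAbs ≤ n :=
          ⟨I.sup Int.natAbs, fun i hi => Finset.le_sup (f := Int.natAbs) hi⟩
        refine Set.mem_iUnion.2 ⟨n, fun w' hw' => hsub fun i hi => ?_⟩
        have := hn i hi
        rw [hw' i (by simp only [Finset.mem_Icc]; omega)]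
        exact (hu i hi).2
    have hVle : ∀ n, μ (V n) ≤ C * ν (V n) := by
      intro n
      have : V n = (Finset.Icc (-n : ℤ) n).restrict ⁻¹'
          ((Finset.Icc (-n : ℤ) n).restrict '' V n) := by
        apply Set.Subset.antisymm (Set.subset_preimage_image _ _)
        rintro w ⟨v, hv, hvw⟩ w' hw'
        refine hv w' fun i hi => (hw' i hi).trans ?_
        exact (congrFun hvw ⟨i, hi⟩).symm
      rw [this]
      exact hfin n _
    rw [← hVU, hVmono.measure_iUnion (μ := μ)]
    refine iSup_le fun n => (hVle n).trans ?_
    gcongr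
    exact Set.subset_iUnion V n
  intro A hA
  by_contra hne
  have hpos : 0 < μ A := pos_iff_ne_zero.2 hne
  have hle : ∀ ε : ENNReal, ε ≠ 0 → μ A ≤ C * ε := by
    intro ε hε
    obtain ⟨U, hAU, hU, hlt⟩ := A.exists_isOpen_lt_of_lt (μ := ν) ε (by rw [hA]; exact pos_iff_ne_zero.2 hε)
    exact (measure_mono hAU).trans ((hopen U hU).trans (by gcongr))
  have h1 : Tendsto (fun n : ℕ => C * ((n : ENNReal))⁻¹) atTop (𝓝 (C * 0)) :=
    ENNReal.Tendsto.const_mul ENNReal.tendsto_inv_nat_nhds_zero (Or.inr hC)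
  have h2 := ge_of_tendsto' h1 (fun n => hle _ (by simp))
  simp at h2
  exact hne h2

lemma shiftInv_meas : Measurable shiftInv :=
  measurable_pi_lambda _ fun i => measurable_pi_apply (i - 1)

lemma shift_cyl (p : ℤ → ℝ) (P : Measure Xspace)
    (h : ∀ k l : ℤ, ∀ b : ℤ → Bool,
    P {w : Xspace | ∀ i ∈ Finset.Icc k l, w i = b i}
      = ∏ i ∈ Finset.Icc k l, ENNReal.ofReal (coordWt (p i) (b i))) (k l : ℤ) (b : ℤ → Bool) :
    Measure.map shiftInv P {w : Xspace | ∀ i ∈ Finset.Icc k l, w i = b i}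
      = ∏ i ∈ Finset.Icc k l, ENNReal.ofReal (coordWt (p (i - 1)) (b i)) := by
  have hm : MeasurableSet {w : Xspace | ∀ i ∈ Finset.Icc k l, w i = b i} := by
    have : {w : Xspace | ∀ i ∈ Finset.Icc k l, w i = b i} =
        ⋂ i ∈ Finset.Icc k l, (fun w : Xspace => w i) ⁻¹' {b i} := by ext; simp
    rw [this]
    exact Finset.measurableSet_biInter _ fun i _ =>
      measurable_pi_apply i (measurableSet_singleton _)
  rw [Measure.map_apply shiftInv_meas hm]
  have e : shiftInv ⁻¹' {w : Xspace | ∀ i ∈ Finset.Icc k l, w i = b i} =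
      {w : Xspace | ∀ i ∈ Finset.Icc (k - 1) (l - 1), w i = (fun j => b (j + 1)) i} := by
    ext w
    simp only [Set.mem_preimage, Set.mem_ofPred_eq, shiftInv, Finset.mem_Icc]
    constructor
    · intro H i hi
      simpa using H (i + 1) (by omega)
    · intro H i hi
      simpa using H (i - 1) (by omega)
  rw [e, h]
  symm
  apply Finset.prod_bij (fun i _ => i - 1)
  · intro i hi; simp only [Finset.mem_Icc] at *; omega
  · intro i _ j _ hij; omega
  · intro i hi; exact ⟨i + 1, by simp only [Finset.mem_Icc] at *; omega, by omega⟩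
  · intro i _; simp

/-- For the constructed measure,
`∑_k (P_k({0}) - P_{k-1}({0}))² = 2 ∑_{t≥1} ((λ_t-1)/(2(1+λ_t)))² < ∞`, and consequently the
shift is nonsingular. -/
theorem kakutani_sum_eq_and_nonsingular (D : KosloffData) (p : ℤ → ℝ) (P : Measure Xspace)
    (hP : IsKosloffMeasure D p P) :
    Summable (fun k : ℤ => (p k - p (k - 1)) ^ 2) ∧
    (∑' k : ℤ, (p k - p (k - 1)) ^ 2)
        = 2 * ∑' t : ℕ, ((D.lam (t + 1) - 1) / (2 * (1 + D.lam (t + 1)))) ^ 2 ∧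
    ShiftNonsingular P := by
  have H2 := kos_hasSum D p P hP 2 (by norm_num) _ (kos_summable2 D).hasSum
  simp only [sq_abs] at H2
  have H1 := (kos_hasSum D p P hP 1 (by norm_num) _
    (by simpa only [pow_one] using (kos_summable1 D).hasSum)).summable
  simp only [pow_one] at H1
  refine ⟨H2.summable, by rw [H2.tsum_eq, two_mul], ?_⟩
  obtain ⟨δ, hδ, hlow⟩ := kos_lower D p P hP
  obtain ⟨hprob, -, -, -, hcyl⟩ := hP
  have hsh := shift_cyl p P hcyl
  have := Measure.isProbabilityMeasure_map (μ := P) shiftInv_meas.aemeasurable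
  constructor
  · refine ac_of_cyl _ _ (ENNReal.ofReal (Real.exp (∑' k, |p (k - 1) - p k| / δ)))
      ENNReal.ofReal_ne_top fun n b => ?_
    rw [hsh, hcyl]
    exact cyl_bound (fun i => p (i - 1)) p δ hδ hlow (fun k b => hδ.le.trans (hlow _ b))
      (by simpa only [abs_sub_comm] using H1) _ b
  · refine ac_of_cyl _ _ (ENNReal.ofReal (Real.exp (∑' k, |p k - p (k - 1)| / δ)))
      ENNReal.ofReal_ne_top fun n b => ?_
    rw [hsh, hcyl]
    exact cyl_bound p (fun i => p (i - 1)) δ hδ (fun k b => hlow _ b)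
      (fun k b => hδ.le.trans (hlow _ b)) H1 _ b
end
end

section
/- lim_{n→∞} sup_{w∈𝕏} | (Tⁿ)'(w) / ( ∏_{k=-N_{t(n)}+1}^{n-1} P_{k−n}({w_k}) / P_k({w_k}) ) − 1 | = 0; that is, the Radon–Nikodym derivative (Tⁿ)'(w) is asymptotically equal, uniformly in w ∈ 𝕏, to the finite product ∏_{k=-N_{t(n)}+1}^{n-1} P_{k−n}({w_k}) / P_k({w_k}). -/
open MeasureTheory Filter Topology

noncomputable section

lemma meas_le_of_cyl (μ ν : Measure Xspace) [IsFiniteMeasure μ] [IsFiniteMeasure ν] (L0 : ℤ)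
    (h : ∀ L : ℤ, L0 ≤ L → ∀ b : ℤ → Bool,
      μ {w : Xspace | ∀ i ∈ Finset.Icc (-L) L, w i = b i} ≤
      ν {w : Xspace | ∀ i ∈ Finset.Icc (-L) L, w i = b i}) : μ ≤ ν := by
  classical
  have hcyl : ∀ A ∈ measurableCylinders (fun _ : ℤ => Bool), μ A ≤ ν A := by
    intro A hA
    obtain ⟨I, S, hS, rfl⟩ := (mem_measurableCylinders A).1 hA
    obtain ⟨L, hL0, hIL⟩ : ∃ L : ℤ, L0 ≤ L ∧ I ⊆ Finset.Icc (-L) L := by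
      refine ⟨max L0 (∑ i ∈ I, |i|), le_max_left _ _, ?_⟩
      intro i hi
      have : |i| ≤ ∑ i ∈ I, |i| := Finset.single_le_sum (f := fun i => |i|) (fun _ _ => abs_nonneg _) hi
      have h2 : |i| ≤ max L0 (∑ i ∈ I, |i|) := this.trans (le_max_right _ _)
      rw [Finset.mem_Icc]
      exact abs_le.1 h2
    set J := Finset.Icc (-L) L
    have hA' : cylinder I S = J.restrict (π := fun _ => Bool) ⁻¹'
        (((Finset.univ.filter fun x : (J → Bool) => Finset.restrict₂ (π := fun _ => Bool) hIL x ∈ S) : Finset (J → Bool)) : Set (J → Bool)) := by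
      ext w
      simp [cylinder]
      rfl
    have hme : ∀ y ∈ (Finset.univ.filter fun x : (J → Bool) => Finset.restrict₂ (π := fun _ => Bool) hIL x ∈ S),
        MeasurableSet (J.restrict (π := fun _ => Bool) ⁻¹' {y}) := fun y _ =>
      (Finset.measurable_restrict J) (measurableSet_singleton y)
    rw [hA', ← sum_measure_preimage_singleton _ hme, ← sum_measure_preimage_singleton _ hme]
    refine Finset.sum_le_sum fun x _ => ?_
    have : (J.restrict (π := fun _ => Bool) ⁻¹' {x}) =
        {w : Xspace | ∀ i ∈ J, w i = (fun i => if hi : i ∈ J then x ⟨i, hi⟩ else false) i} := by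
      ext w
      simp only [Set.mem_preimage, Set.mem_singleton_iff, Set.mem_ofPred_eq]
      constructor
      · rintro rfl i hi
        simp [hi]
      · intro hw
        ext ⟨i, hi⟩
        have := hw i hi
        simpa [hi] using this
    rw [this]
    exact h L hL0 _
  refine Measure.le_intro fun A hA _ => ?_
  refine ENNReal.le_of_forall_pos_le_add fun ε hε _ => ?_
  have hε2 : (0 : ENNReal) < (ε : ENNReal) / 2 := by
    simp [hε.ne']
  obtain ⟨B, hB, hBA⟩ := exists_measure_symmDiff_lt_of_generateFrom_isSetRing (μ := μ + ν)
    (C := measurableCylinders (fun _ : ℤ => Bool)) isSetRing_measurableCylinders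
    ⟨{Set.univ}, Set.countable_singleton _, by
      simpa using univ_mem_measurableCylinders (fun _ : ℤ => Bool), by simp⟩
    generateFrom_measurableCylinders.symm hA hε2
  rw [Measure.add_apply] at hBA
  have e1 : μ A ≤ μ B + μ (symmDiff B A) := by
    refine (measure_mono ?_).trans (measure_union_le _ _)
    intro x hx
    by_cases hxB : x ∈ B
    · exact Or.inl hxB
    · exact Or.inr (Or.inr ⟨hx, hxB⟩)
  have e2 : ν B ≤ ν A + ν (symmDiff B A) := by
    refine (measure_mono ?_).trans (measure_union_le _ _)
    intro x hx
    by_cases hxB : x ∈ A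
    · exact Or.inl hxB
    · exact Or.inr (Or.inl ⟨hx, hxB⟩)
  calc μ A ≤ μ B + μ (symmDiff B A) := e1
    _ ≤ ν B + μ (symmDiff B A) := add_le_add_left (hcyl B hB) _
    _ ≤ ν A + ν (symmDiff B A) + μ (symmDiff B A) := by gcongr
    _ = ν A + (μ (symmDiff B A) + ν (symmDiff B A)) := by ring
    _ ≤ ν A + ε := by
      gcongr
      exact hBA.le.trans ENNReal.half_le_self

lemma shiftInv_iter (n : ℕ) (w : Xspace) (i : ℤ) : (shiftInv^[n]) w i = w (i - n) := by
  induction n generalizing w with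
  | zero => simp
  | succ n ih =>
    rw [Function.iterate_succ_apply, ih, shiftInv]
    congr 1; push_cast; ring

lemma measurable_shiftInv_iter (n : ℕ) : Measurable (shiftInv^[n]) := by
  rw [measurable_pi_iff]
  intro i
  simp_rw [shiftInv_iter]
  exact measurable_pi_apply _

lemma coord_meas (k : ℤ) (f : Bool → ℝ) : Measurable fun w : Xspace => f (w k) :=
  (measurable_of_finite f).comp (measurable_pi_apply k)

/-- main measure-theoretic reduction -/
lemma rn_bound (p : ℤ → ℝ) (hp0 : ∀ k, 0 < p k) (hp1 : ∀ k, p k < 1) (P : Measure Xspace)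
    [IsProbabilityMeasure P]
    (hP : ∀ k l : ℤ, ∀ b : ℤ → Bool,
      P {w : Xspace | ∀ i ∈ Finset.Icc k l, w i = b i}
        = ∏ i ∈ Finset.Icc k l, ENNReal.ofReal (coordWt (p i) (b i)))
    (n : ℕ) (a c : ℤ) (η : ℝ)
    (h : ∀ L : ℤ, |a| ≤ L → |c| ≤ L → ∀ b : ℤ → Bool,
      |∑ k ∈ Finset.Icc (-L) L \ Finset.Icc a c, Real.log (rr p n b k)| ≤ η) :
    ∀ᵐ w ∂P, Real.exp (-η) * (∏ k ∈ Finset.Icc a c, rr p n w k) ≤ (rnD P n w).toReal ∧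
      (rnD P n w).toReal ≤ Real.exp η * (∏ k ∈ Finset.Icc a c, rr p n w k) := by
  have hw : ∀ k b, 0 < coordWt (p k) b := by
    intro k b; unfold coordWt; split_ifs
    · linarith [hp1 k]
    · exact hp0 k
  have hr : ∀ w k, 0 < rr p n w k := fun w k => div_pos (hw _ _) (hw _ _)
  set F : Xspace → ℝ := fun w => ∏ k ∈ Finset.Icc a c, rr p n w k with hF
  have hFpos : ∀ w, 0 < F w := fun w => Finset.prod_pos fun k _ => hr w k
  have hFm : Measurable F := by
    refine Finset.measurable_prod _ fun k _ => ?_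
    exact coord_meas k (fun b => coordWt (p (k - n)) b / coordWt (p k) b)
  obtain ⟨B, hB⟩ : ∃ B : ℝ, ∀ w, F w ≤ B := by
    refine ⟨∏ k ∈ Finset.Icc a c, (rr p n (fun _ => true) k + rr p n (fun _ => false) k), fun w => ?_⟩
    refine Finset.prod_le_prod (fun k _ => (hr w k).le) fun k _ => ?_
    have h1 := hr (fun _ => true) k
    have h2 := hr (fun _ => false) k
    unfold rr at *
    cases w k <;> simp at * <;> linarith
  set Q := Measure.map (shiftInv^[n]) P with hQ
  have : IsProbabilityMeasure Q := Measure.isProbabilityMeasure_map (measurable_shiftInv_iter n).aemeasurable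
  have hQc : ∀ k l : ℤ, ∀ b : ℤ → Bool,
      Q {w : Xspace | ∀ i ∈ Finset.Icc k l, w i = b i}
        = ENNReal.ofReal (∏ i ∈ Finset.Icc k l, coordWt (p (i - n)) (b i)) := by
    intro k l b
    have hms : MeasurableSet {w : Xspace | ∀ i ∈ Finset.Icc k l, w i = b i} := by
      have : {w : Xspace | ∀ i ∈ Finset.Icc k l, w i = b i} =
        ⋂ i ∈ Finset.Icc k l, (fun w : Xspace => w i) ⁻¹' {b i} := by ext; simp
      rw [this]
      exact Finset.measurableSet_biInter _ fun i _ => measurable_pi_apply i (measurableSet_singleton _)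
    rw [hQ, Measure.map_apply (measurable_shiftInv_iter n) hms]
    have : (shiftInv^[n]) ⁻¹' {w : Xspace | ∀ i ∈ Finset.Icc k l, w i = b i} =
        {w : Xspace | ∀ i ∈ Finset.Icc (k - n) (l - n), w i = (fun i => b (i + n)) i} := by
      ext w
      simp only [Set.mem_preimage, Set.mem_ofPred_eq, shiftInv_iter, Finset.mem_Icc]
      constructor
      · intro hh i hi
        have := hh (i + n) ⟨by linarith, by linarith⟩
        simpa using this
      · intro hh i hi
        have := hh (i - n) ⟨by linarith, by linarith⟩
        simpa using this
    rw [this, hP, ENNReal.ofReal_prod_of_nonneg (fun i _ => (hw _ _).le)]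
    refine Finset.prod_bij' (fun i _ => i + n) (fun i _ => i - n) ?_ ?_ ?_ ?_ ?_ <;>
      intro i hi <;> simp only [Finset.mem_Icc] at hi ⊢
    · constructor <;> linarith
    · constructor <;> linarith
    · ring
    · ring
    · simp
  have hms : ∀ k l (b : ℤ → Bool), MeasurableSet {w : Xspace | ∀ i ∈ Finset.Icc k l, w i = b i} := by
    intro k l b
    have : {w : Xspace | ∀ i ∈ Finset.Icc k l, w i = b i} =
        ⋂ i ∈ Finset.Icc k l, (fun w : Xspace => w i) ⁻¹' {b i} := by ext; simp
    rw [this]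
    exact Finset.measurableSet_biInter _ fun i _ => measurable_pi_apply i (measurableSet_singleton _)
  have hfin : ∀ C : ℝ, 0 ≤ C → IsFiniteMeasure (P.withDensity fun w => ENNReal.ofReal (C * F w)) := by
    intro C hC
    refine isFiniteMeasure_withDensity ?_
    refine (lt_of_le_of_lt (lintegral_mono (g := fun _ => ENNReal.ofReal (C * B)) fun w => ?_) ?_).ne
    · exact ENNReal.ofReal_le_ofReal (mul_le_mul_of_nonneg_left (hB w) hC)
    · simp
  -- the value on cylinders
  have hdens : ∀ C : ℝ, ∀ L : ℤ, |a| ≤ L → |c| ≤ L → ∀ b : ℤ → Bool,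
      (P.withDensity fun w => ENNReal.ofReal (C * F w))
        {w : Xspace | ∀ i ∈ Finset.Icc (-L) L, w i = b i}
      = ENNReal.ofReal (C * F b * ∏ i ∈ Finset.Icc (-L) L, coordWt (p i) (b i)) := by
    intro C L ha hc b
    have ha' := abs_le.1 ha
    have hc' := abs_le.1 hc
    rw [withDensity_apply _ (hms _ _ _), setLIntegral_congr_fun (g := fun _ => ENNReal.ofReal (C * F b)) (hms _ _ _)]
    · rw [setLIntegral_const, hP, ENNReal.ofReal_mul' (Finset.prod_nonneg fun i _ => (hw _ _).le),
        ENNReal.ofReal_prod_of_nonneg (fun i _ => (hw _ _).le)]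
    · intro w hww
      have : F w = F b := by
        refine Finset.prod_congr rfl fun k hk => ?_
        rw [Finset.mem_Icc] at hk
        unfold rr
        rw [hww k (Finset.mem_Icc.2 ⟨by linarith, by linarith⟩)]
      simp only [this]
  have hprod : ∀ L : ℤ, |a| ≤ L → |c| ≤ L → ∀ b : ℤ → Bool,
      ∃ R : ℝ, Real.exp (-η) ≤ R ∧ R ≤ Real.exp η ∧
      ∏ i ∈ Finset.Icc (-L) L, coordWt (p (i - n)) (b i) =
        R * F b * ∏ i ∈ Finset.Icc (-L) L, coordWt (p i) (b i) := by
    intro L ha hc b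
    have ha' := abs_le.1 ha
    have hc' := abs_le.1 hc
    refine ⟨∏ k ∈ Finset.Icc (-L) L \ Finset.Icc a c, rr p n b k, ?_, ?_, ?_⟩
    · rw [← Real.le_log_iff_exp_le (Finset.prod_pos fun k _ => hr b k),
        Real.log_prod (fun k _ => (hr b k).ne')]
      exact (abs_le.1 (h L ha hc b)).1
    · rw [← Real.log_le_iff_le_exp (Finset.prod_pos fun k _ => hr b k),
        Real.log_prod (fun k _ => (hr b k).ne')]
      exact (abs_le.1 (h L ha hc b)).2
    · rw [hF]
      simp only
      rw [Finset.prod_sdiff (Finset.Icc_subset_Icc ha'.1 hc'.2), ← Finset.prod_mul_distrib]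
      refine Finset.prod_congr rfl fun k _ => ?_
      unfold rr
      rw [div_mul_cancel₀ _ (hw _ _).ne']
  have hLpos : ∀ (L : ℤ) (b : ℤ → Bool), 0 ≤ ∏ i ∈ Finset.Icc (-L) L, coordWt (p i) (b i) := fun L b =>
    Finset.prod_nonneg fun i _ => (hw _ _).le
  have hup : Q ≤ P.withDensity fun w => ENNReal.ofReal (Real.exp η * F w) := by
    have := hfin _ (Real.exp_pos η).le
    refine meas_le_of_cyl _ _ (max |a| |c|) fun L hL b => ?_
    have h1 := (le_max_left _ _).trans hL
    have h2 := (le_max_right _ _).trans hL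
    rw [hQc, hdens _ L h1 h2]
    obtain ⟨R, hR1, hR2, hR3⟩ := hprod L h1 h2 b
    rw [hR3]
    refine ENNReal.ofReal_le_ofReal ?_
    have := hLpos L b
    have := (hFpos b).le
    gcongr
  have hlow : (P.withDensity fun w => ENNReal.ofReal (Real.exp (-η) * F w)) ≤ Q := by
    have := hfin _ (Real.exp_pos (-η)).le
    refine meas_le_of_cyl _ _ (max |a| |c|) fun L hL b => ?_
    have h1 := (le_max_left _ _).trans hL
    have h2 := (le_max_right _ _).trans hL
    rw [hQc, hdens _ L h1 h2]
    obtain ⟨R, hR1, hR2, hR3⟩ := hprod L h1 h2 b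
    rw [hR3]
    refine ENNReal.ofReal_le_ofReal ?_
    have := hLpos L b
    have := (hFpos b).le
    gcongr
  have hac : Q ≪ P := (Measure.absolutelyContinuous_of_le hup).trans (withDensity_absolutelyContinuous _ _)
  have hsf : SigmaFinite Q := inferInstance
  have hsP : SigmaFinite P := inferInstance
  have hLD : Q.HaveLebesgueDecomposition P := Measure.haveLebesgueDecomposition_of_sigmaFinite Q P
  have hQd : P.withDensity (rnD P n) = Q := Measure.withDensity_rnDeriv_eq Q P hac
  have hmrn : Measurable (rnD P n) := Measure.measurable_rnDeriv _ _
  have hmC : ∀ C : ℝ, Measurable fun w => ENNReal.ofReal (C * F w) := fun C =>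
    (hFm.const_mul C).ennreal_ofReal
  have u1 : (rnD P n) ≤ᵐ[P] fun w => ENNReal.ofReal (Real.exp η * F w) := by
    refine ae_le_of_forall_setLIntegral_le_of_sigmaFinite hmrn fun s hs _ => ?_
    rw [← withDensity_apply _ hs, ← withDensity_apply _ hs, hQd]
    exact hup s
  have u2 : (fun w => ENNReal.ofReal (Real.exp (-η) * F w)) ≤ᵐ[P] (rnD P n) := by
    refine ae_le_of_forall_setLIntegral_le_of_sigmaFinite (hmC _) fun s hs _ => ?_
    rw [← withDensity_apply _ hs, ← withDensity_apply _ hs, hQd]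
    exact hlow s
  filter_upwards [u1, u2] with w h1 h2
  have hpos : ∀ x : ℝ, 0 ≤ Real.exp x * F w := fun x => mul_nonneg (Real.exp_pos x).le (hFpos w).le
  refine ⟨?_, ENNReal.toReal_le_of_le_ofReal (hpos _) h1⟩
  exact (ENNReal.ofReal_le_iff_le_toReal (ne_top_of_le_ne_top ENNReal.ofReal_ne_top h1)).1 h2

lemma one_add_exp_le (x y : ℝ) : Real.log (1 + Real.exp y) ≤ Real.log (1 + Real.exp x) + |x - y| := by
  rw [← Real.log_exp |x - y|, ← Real.log_mul (by positivity) (by positivity)]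
  refine Real.log_le_log (by positivity) ?_
  rw [add_mul, ← Real.exp_add, one_mul]
  refine add_le_add (Real.one_le_exp (abs_nonneg _)) (Real.exp_le_exp.2 ?_)
  linarith [neg_abs_le (x - y)]

lemma log_ratio_le (x y : ℝ) (b : Bool) :
    |Real.log (coordWt (1 / (1 + Real.exp x)) b / coordWt (1 / (1 + Real.exp y)) b)| ≤ |x - y| := by
  have key : ∀ x y : ℝ, |Real.log ((1 + Real.exp x)⁻¹ / (1 + Real.exp y)⁻¹)| ≤ |x - y| := by
    intro x y
    rw [Real.log_div (by positivity) (by positivity), Real.log_inv, Real.log_inv, abs_le]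
    have h1 := one_add_exp_le x y
    have h2 := one_add_exp_le y x
    rw [abs_sub_comm] at h2
    constructor <;> linarith
  have e : ∀ x : ℝ, 1 - 1 / (1 + Real.exp x) = (1 + Real.exp (-x))⁻¹ := by
    intro x
    rw [Real.exp_neg]
    have := Real.exp_pos x
    field_simp
    ring
  cases b
  · simpa [coordWt] using key x y
  · have := key (-x) (-y)
    simp only [coordWt, if_true, e]
    refine this.trans (le_of_eq ?_)
    rw [← abs_neg]; congr 1; ring

def cc (D : KosloffData) (u : ℕ) : ℝ :=
  (2 : ℝ) ^ (-(⌊Real.logb 2 ((D.M (u - 1) : ℝ) / D.eps u)⌋ + 1))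

/-- step function -/
def stp (x k : ℤ) : ℝ := if x < k then 1 else 0

lemma stp_sum (S : Finset ℤ) (x : ℤ) (n : ℕ) : ∑ k ∈ S, |stp x (k - n) - stp x k| ≤ n := by
  have h : ∀ k ∈ S, |stp x (k - n) - stp x k| ≤ if k ∈ Finset.Ioc x (x + n) then 1 else 0 := by
    intro k _
    simp only [stp, Finset.mem_Ioc]
    split_ifs <;> first | (exfalso; omega) | norm_num
  refine (Finset.sum_le_sum h).trans ?_
  rw [Finset.sum_ite_mem, Finset.sum_const, nsmul_eq_mul, mul_one]
  have h1 : (S ∩ Finset.Ioc x (x + n)).card ≤ (Finset.Ioc x (x + n)).card :=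
    Finset.card_le_card Finset.inter_subset_right
  rw [Int.card_Ioc] at h1
  have : (S ∩ Finset.Ioc x (x + n)).card ≤ n := by omega
  exact_mod_cast this

namespace KosloffData
variable (D : KosloffData)

lemma M_lt_N (t : ℕ) : D.M t < D.N (t + 1) := by
  have h1 := D.N_def (t + 1) (by omega)
  have h2 := D.nn_pos (t + 1) (by omega)
  simp at h1; omega

lemma N_le_M (t : ℕ) (ht : 1 ≤ t) : D.N t ≤ D.M t := by
  have := D.M_def t ht; omega

lemma M_mono : StrictMono D.M :=
  strictMono_nat_of_lt_succ fun t => (D.M_lt_N t).trans_le (D.N_le_M (t + 1) (by omega))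

lemma N_mono {s t : ℕ} (hs : 1 ≤ s) (h : s ≤ t) : D.N s ≤ D.N t := by
  obtain ⟨t, rfl⟩ : ∃ t', t = t' + 1 := ⟨t - 1, by omega⟩
  rcases h.eq_or_lt with rfl | h
  · exact le_rfl
  · exact (D.N_le_M s hs).trans ((D.M_mono.monotone (by omega : s ≤ t)).trans (D.M_lt_N t).le)

lemma lt_M (t : ℕ) : t < D.M t := by
  induction t with
  | zero => rw [D.M_zero]; exact one_pos
  | succ t ih => exact Nat.lt_of_le_of_lt ih (D.M_mono (Nat.lt_succ_self t))

lemma cc_nonneg (u : ℕ) : 0 ≤ cc D u := by unfold cc; positivity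

lemma M_mul_cc (u : ℕ) (hu : 1 ≤ u) : (D.M (u - 1) : ℝ) * cc D u ≤ D.eps u := by
  have hM : (0 : ℝ) < D.M (u - 1) := by
    exact_mod_cast Nat.lt_of_le_of_lt (Nat.zero_le _) (D.lt_M (u - 1))
  have he := D.eps_pos u hu
  set r := (D.M (u - 1) : ℝ) / D.eps u with hr
  have hr0 : 0 < r := div_pos hM he
  have h1 : r ≤ (2 : ℝ) ^ (⌊Real.logb 2 r⌋ + 1) := by
    have : r = (2 : ℝ) ^ (Real.logb 2 r) := (Real.rpow_logb (by norm_num) (by norm_num) hr0).symm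
    conv_lhs => rw [this]
    rw [← Real.rpow_intCast]
    refine Real.rpow_le_rpow_of_exponent_le (by norm_num) ?_
    push_cast
    exact (Int.lt_floor_add_one _).le
  have h2 : cc D u ≤ r⁻¹ := by
    unfold cc
    rw [zpow_neg]
    exact inv_anti₀ hr0 h1
  calc (D.M (u - 1) : ℝ) * cc D u ≤ D.M (u - 1) * r⁻¹ := by gcongr
    _ = D.eps u := by rw [hr]; field_simp

end KosloffData

lemma p_form (D : KosloffData) (p : ℤ → ℝ) (P : Measure Xspace) (hP : IsKosloffMeasure D p P) (k : ℤ) :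
    p k = 1 / (1 + Real.exp (Real.log (1 / p k - 1))) := by
  obtain ⟨_, h0, h1, h2, _⟩ := hP
  have aux : ∀ U : ℕ, -(D.M U : ℤ) < k → ∃ x, p k = 1 / (1 + Real.exp x) := by
    intro U
    induction U with
    | zero =>
      intro h
      rw [D.M_zero] at h
      exact ⟨0, by rw [h0 k (by push_cast at h; omega)]; norm_num⟩
    | succ U ih =>
      intro h
      by_cases hU : -(D.M U : ℤ) < k
      · exact ih hU
      by_cases hN : -(D.N (U + 1) : ℤ) < k
      · refine ⟨cc D (U + 1), ?_⟩
        rw [h1 (U + 1) (by omega) k hN (by simpa using hU), D.lam_def (U + 1) (by omega)]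
        rfl
      · exact ⟨0, by rw [h2 (U + 1) (by omega) k h (by omega)]; norm_num⟩
  obtain ⟨x, hx⟩ := aux k.natAbs (by have := D.lt_M k.natAbs; omega)
  rw [hx]
  simp

lemma s_form (D : KosloffData) (p : ℤ → ℝ) (P : Measure Xspace) (hP : IsKosloffMeasure D p P)
    (t : ℕ) (ht : 1 ≤ t) (U : ℕ) (hU : t ≤ U) (j : ℤ) (hj : -(D.M U : ℤ) < j) (hj2 : j ≤ -(D.N t : ℤ)) :
    Real.log (1 / p j - 1) =
      ∑ u ∈ Finset.Ioc t U, cc D u * (stp (-(D.N u : ℤ)) j - stp (-(D.M (u - 1) : ℤ)) j) := by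
  obtain ⟨_, h0, h1, h2, _⟩ := hP
  induction U, hU using Nat.le_induction with
  | base =>
    rw [h2 t ht j hj hj2]; norm_num
  | succ U hU ih =>
    rw [← Finset.insert_Ioc_right_eq_Ioc_add_one hU, Finset.sum_insert (by simp)]
    have hMN := D.M_lt_N U
    by_cases hjU : -(D.M U : ℤ) < j
    · rw [← ih hjU]
      have e1 : stp (-(D.N (U + 1) : ℤ)) j = 1 := by rw [stp, if_pos (by omega)]
      have e2 : stp (-(D.M (U + 1 - 1) : ℤ)) j = 1 := by simp only [add_tsub_cancel_right]; rw [stp, if_pos (by omega)]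
      rw [e1, e2]; ring
    · have hz : ∑ u ∈ Finset.Ioc t U, cc D u * (stp (-(D.N u : ℤ)) j - stp (-(D.M (u - 1) : ℤ)) j) = 0 := by
        refine Finset.sum_eq_zero fun u hu => ?_
        rw [Finset.mem_Ioc] at hu
        have a1 := D.N_le_M u (by omega)
        have a2 := D.M_mono.monotone hu.2
        have a3 := D.M_mono.monotone (by omega : u - 1 ≤ U)
        rw [stp, stp, if_neg (by omega), if_neg (by omega)]; ring
      have e2 : stp (-(D.M (U + 1 - 1) : ℤ)) j = 0 := by simp only [add_tsub_cancel_right]; rw [stp, if_neg (by omega)]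
      rw [hz, e2]
      by_cases hN : -(D.N (U + 1) : ℤ) < j
      · rw [h1 (U + 1) (by omega) j hN (by simpa using hjU), D.lam_def (U + 1) (by omega), stp, if_pos hN]
        simp [cc]
      · rw [h2 (U + 1) (by omega) j hj (by omega), stp, if_neg hN]; norm_num

lemma log_sum_bound (D : KosloffData) (p : ℤ → ℝ) (P : Measure Xspace) (hP : IsKosloffMeasure D p P)
    (t : ℕ) (ht : 1 ≤ t) (n : ℕ) (hn : n < D.N t) (L : ℤ) :
    ∃ U : ℕ, t ≤ U ∧ ∀ b : ℤ → Bool,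
      |∑ k ∈ Finset.Icc (-L) L \ Finset.Icc (-(D.N t : ℤ) + 1) ((n : ℤ) - 1), Real.log (rr p n b k)|
        ≤ 2 * ∑ u ∈ Finset.Ioc t U, D.eps u := by
  set S := Finset.Icc (-L) L \ Finset.Icc (-(D.N t : ℤ) + 1) ((n : ℤ) - 1) with hS
  set U := t + L.natAbs + n with hUdef
  have hUM := D.lt_M U
  refine ⟨U, by omega, fun b => ?_⟩
  have hpt : ∀ k ∈ S, |Real.log (rr p n b k)| ≤ ∑ u ∈ Finset.Ioc t U, cc D u *
      (|stp (-(D.N u : ℤ)) (k - n) - stp (-(D.N u : ℤ)) k| +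
       |stp (-(D.M (u - 1) : ℤ)) (k - n) - stp (-(D.M (u - 1) : ℤ)) k|) := by
    intro k hk
    have h1 : |Real.log (rr p n b k)| ≤ |Real.log (1 / p (k - n) - 1) - Real.log (1 / p k - 1)| := by
      have := log_ratio_le (Real.log (1 / p (k - n) - 1)) (Real.log (1 / p k - 1)) (b k)
      rwa [← p_form D p P hP, ← p_form D p P hP] at this
    refine h1.trans ?_
    simp only [hS, Finset.mem_sdiff, Finset.mem_Icc, not_and] at hk
    by_cases hk2 : k ≤ -(D.N t : ℤ)
    · rw [s_form D p P hP t ht U (by omega) k (by omega) hk2,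
        s_form D p P hP t ht U (by omega) (k - n) (by omega) (by omega), ← Finset.sum_sub_distrib]
      refine (Finset.abs_sum_le_sum_abs _ _).trans (Finset.sum_le_sum fun u _ => ?_)
      rw [← mul_sub, abs_mul, abs_of_nonneg (D.cc_nonneg u)]
      refine mul_le_mul_of_nonneg_left ?_ (D.cc_nonneg u)
      refine le_trans (le_of_eq ?_) (abs_sub _ _)
      congr 1; ring
    · have : p (k - n) = p k := by
        rw [hP.2.1 k (by omega), hP.2.1 (k - n) (by omega)]
      rw [this, sub_self, abs_zero]
      exact Finset.sum_nonneg fun u _ => mul_nonneg (D.cc_nonneg u) (by positivity)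
  refine (Finset.abs_sum_le_sum_abs _ _).trans ((Finset.sum_le_sum hpt).trans ?_)
  rw [Finset.sum_comm, Finset.mul_sum]
  refine Finset.sum_le_sum fun u hu => ?_
  rw [Finset.mem_Ioc] at hu
  rw [← Finset.mul_sum, Finset.sum_add_distrib]
  have a1 := stp_sum S (-(D.N u : ℤ)) n
  have a2 := stp_sum S (-(D.M (u - 1) : ℤ)) n
  have a3 : (n : ℝ) ≤ D.M (u - 1) := by
    have := D.N_le_M t ht
    have := D.M_mono.monotone (by omega : t ≤ u - 1)
    exact_mod_cast (by omega : n ≤ D.M (u - 1))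
  have a4 := D.M_mul_cc u (by omega)
  have a5 := D.cc_nonneg u
  nlinarith [mul_le_mul_of_nonneg_left (add_le_add a1 a2) a5, mul_le_mul_of_nonneg_right a3 a5]

lemma eps_tail (D : KosloffData) (η : ℝ) (hη : 0 < η) :
    ∃ t₀ : ℕ, ∀ t U : ℕ, t₀ ≤ t → 2 * ∑ u ∈ Finset.Ioc t U, D.eps u ≤ η := by
  obtain ⟨s, hs⟩ := summable_iff_vanishing_norm.1 D.eps_summable (η / 2) (by positivity)
  refine ⟨s.sup id, fun t U ht => ?_⟩
  have := hs (Finset.Ioc t U) (by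
    rw [Finset.disjoint_left]
    intro a ha has
    have : a ≤ s.sup id := Finset.le_sup (f := id) has
    rw [Finset.mem_Ioc] at ha
    omega)
  have h2 := (abs_lt.1 this).2
  linarith

/-- `(Tⁿ)'(w)` is asymptotically equal, uniformly in `w` (a.e.), to the finite
product `∏_{k=-N_{t(n)}+1}^{n-1} P_{k-n}({w_k})/P_k({w_k})`. -/
theorem rnDeriv_asymptotic_finite_product (D : KosloffData) (p : ℤ → ℝ) (P : Measure Xspace)
    (hP : IsKosloffMeasure D p P) :
    ∀ δ : ℝ, 0 < δ → ∃ n₀ : ℕ, ∀ n : ℕ, n₀ ≤ n → ∀ᵐ w ∂P,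
      |(rnD P n w).toReal /
          (∏ k ∈ Finset.Icc (-(D.N (tOf D n) : ℤ) + 1) ((n : ℤ) - 1), rr p n w k) - 1| ≤ δ := by
  intro δ hδ
  set η := Real.log (1 + δ) with hη
  have hη0 : 0 < η := Real.log_pos (by linarith)
  have hexp : Real.exp η = 1 + δ := Real.exp_log (by linarith)
  have hexp2 : 1 - δ ≤ Real.exp (-η) := by
    rw [Real.exp_neg, hexp, ← one_div, le_div_iff₀ (by linarith)]
    nlinarith
  obtain ⟨t₀, ht₀⟩ := eps_tail D η hη0
  refine ⟨D.N (t₀ + 1), fun n hn => ?_⟩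
  have hne : {t : ℕ | 1 ≤ t ∧ n < D.N t}.Nonempty :=
    ⟨n + 1, by omega, (D.lt_M n).trans (D.M_lt_N n)⟩
  have hmem : 1 ≤ tOf D n ∧ n < D.N (tOf D n) := Nat.sInf_mem hne
  have hge : t₀ ≤ tOf D n := by
    by_contra hlt
    have := D.N_mono hmem.1 (by omega : tOf D n ≤ t₀ + 1)
    omega
  have hprob : IsProbabilityMeasure P := hP.1
  have hp : ∀ k, 0 < p k ∧ p k < 1 := by
    intro k
    rw [p_form D p P hP k]
    have := Real.exp_pos (Real.log (1 / p k - 1))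
    refine ⟨by positivity, ?_⟩
    rw [div_lt_one (by positivity)]
    linarith
  have hmain := rn_bound p (fun k => (hp k).1) (fun k => (hp k).2) P hP.2.2.2.2 n
    (-(D.N (tOf D n) : ℤ) + 1) ((n : ℤ) - 1) η (by
      intro L _ _ b
      obtain ⟨U, _, hb⟩ := log_sum_bound D p P hP (tOf D n) hmem.1 n hmem.2 L
      exact (hb b).trans (ht₀ _ _ hge))
  filter_upwards [hmain] with w hw
  have hwt : ∀ k b, 0 < coordWt (p k) b := by
    intro k b; unfold coordWt; split_ifs
    · linarith [(hp k).2]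
    · exact (hp k).1
  have hpos : 0 < ∏ k ∈ Finset.Icc (-(D.N (tOf D n) : ℤ) + 1) ((n : ℤ) - 1), rr p n w k :=
    Finset.prod_pos fun k _ => div_pos (hwt _ _) (hwt _ _)
  have l1 := (le_div_iff₀ hpos).2 hw.1
  have l2 := (div_le_iff₀ hpos).2 hw.2
  rw [hexp] at l2
  rw [abs_le]
  constructor <;> linarith
end
end
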